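/- arXiv:1606.02479 — 2 statements merged into one kernel-verified Lean document; each statement's English description precedes it below -/
import Mathlib

section
/- Let G be a cyclic grid graph with parameters d ≥ 1 and lengths ℓ₁,…,ℓ_d, each ℓᵢ ≥ 5. Then the number of perfect graphical translations of G is exactly 2d (one for each choice of δ = ±eᵢ, i ∈ {1,…,d}). -/
/-- The canonical basis vector `eᵢ` in the vertex group of a cyclic grid graph:
`eᵢ[j] = 1` if `j = i` and `0` otherwise. -/
def cycBasis (d : ℕ) (ℓ : Fin d → ℕ) (i : Fin d) : ∀ j, ZMod (ℓ j) :=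
  fun j => if j = i then 1 else 0

/-- Adjacency in the cyclic grid graph with parameters `d` and `ℓ`:
`v` and `w` are neighbors iff `v - w = ±eᵢ` for some `i`. -/
def CycAdj (d : ℕ) (ℓ : Fin d → ℕ) (v w : ∀ j, ZMod (ℓ j)) : Prop :=
  ∃ i, v - w = cycBasis d ℓ i ∨ w - v = cycBasis d ℓ i

/-- A perfect graphical translation of the cyclic grid graph: a bijection of the vertex
set that maps every vertex to a neighbor and preserves (non-)adjacency both ways. -/
structure IsPerfectTranslation (d : ℕ) (ℓ : Fin d → ℕ)
    (f : (∀ j, ZMod (ℓ j)) → (∀ j, ZMod (ℓ j))) : Prop where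
  bij : Function.Bijective f
  adj_map : ∀ v, CycAdj d ℓ v (f v)
  pres : ∀ v w, CycAdj d ℓ v w ↔ CycAdj d ℓ (f v) (f w)

/-- the unit vectors `±eᵢ` -/
def unitVec {d : ℕ} (ℓ : Fin d → ℕ) (p : Fin d × Bool) : ∀ j, ZMod (ℓ j) :=
  Pi.single p.1 (if p.2 then 1 else -1)

theorem unitVec_neg {d : ℕ} (ℓ : Fin d → ℕ) (p : Fin d × Bool) :
    unitVec ℓ (p.1, !p.2) = - unitVec ℓ p := by
  obtain ⟨i, b⟩ := p
  cases b <;> simp [unitVec, ← Pi.single_neg]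

theorem cycBasis_eq {d : ℕ} (ℓ : Fin d → ℕ) (i : Fin d) :
    cycBasis d ℓ i = unitVec ℓ (i, true) := by
  funext j
  by_cases h : j = i
  · subst h; simp [cycBasis, unitVec]
  · simp [cycBasis, unitVec, h]

theorem cycAdj_iff {d : ℕ} (ℓ : Fin d → ℕ) (v w : ∀ j, ZMod (ℓ j)) :
    CycAdj d ℓ v w ↔ ∃ p, w - v = unitVec ℓ p := by
  unfold CycAdj
  simp only [cycBasis_eq]
  constructor
  · rintro ⟨i, h | h⟩
    · exact ⟨(i, false), by rw [← neg_sub, h]; exact (unitVec_neg ℓ (i, true)).symm⟩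
    · exact ⟨(i, true), h⟩
  · rintro ⟨⟨i, b⟩, h⟩
    refine ⟨i, ?_⟩
    cases b
    · left
      rw [← neg_sub, h]; exact (unitVec_neg ℓ (i, false)).symm
    · right; exact h

theorem small_ne {n : ℕ} (hn : 5 ≤ n) (k : ℕ) (h0 : 0 < k) (h5 : k < 5) :
    (k : ZMod n) ≠ 0 := by
  rw [Ne, ZMod.natCast_eq_zero_iff]
  intro h
  have := Nat.le_of_dvd h0 h
  omega

theorem smalls {n : ℕ} (hn : 5 ≤ n) :
    (1 : ZMod n) ≠ 0 ∧ (2 : ZMod n) ≠ 0 ∧ (3 : ZMod n) ≠ 0 ∧ (4 : ZMod n) ≠ 0 := by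
  refine ⟨?_, ?_, ?_, ?_⟩
  · exact_mod_cast small_ne hn 1 (by norm_num) (by norm_num)
  · exact_mod_cast small_ne hn 2 (by norm_num) (by norm_num)
  · exact_mod_cast small_ne hn 3 (by norm_num) (by norm_num)
  · exact_mod_cast small_ne hn 4 (by norm_num) (by norm_num)

theorem unitVec_inj {d : ℕ} (ℓ : Fin d → ℕ) (hℓ : ∀ i, 5 ≤ ℓ i) :
    Function.Injective (unitVec ℓ) := by
  rintro ⟨i, b⟩ ⟨j, c⟩ h
  obtain ⟨h1, h2, h3, h4⟩ := smalls (hℓ i)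
  have hi := congrFun h i
  by_cases hij : i = j
  · subst hij
    simp only [unitVec, Pi.single_eq_same] at hi
    cases b <;> cases c <;> simp at hi ⊢ <;> first
      | exact h1 (by linear_combination hi)
      | exact h1 (by linear_combination -hi)
      | exact h2 (by linear_combination hi)
      | exact h2 (by linear_combination -hi)
      | exact h3 (by linear_combination hi)
      | exact h3 (by linear_combination -hi)
      | exact h4 (by linear_combination hi)
      | exact h4 (by linear_combination -hi)
  · simp only [unitVec, Pi.single_eq_same, Pi.single_eq_of_ne hij] at hi
    cases b <;> simp at hi <;> grind

/-- Value of a unit vector at a coordinate. -/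
theorem unitVec_apply {d : ℕ} (ℓ : Fin d → ℕ) (i : Fin d) (p : Fin d × Bool) :
    (p.1 ≠ i ∧ unitVec ℓ p i = 0) ∨ (p = (i, true) ∧ unitVec ℓ p i = 1) ∨
      (p = (i, false) ∧ unitVec ℓ p i = -1) := by
  obtain ⟨j, b⟩ := p
  by_cases h : j = i
  · subst h
    cases b <;> simp [unitVec]
  · left
    exact ⟨h, by simp [unitVec, Pi.single_eq_of_ne (Ne.symm h)]⟩

theorem unitVec_sum {d : ℕ} (ℓ : Fin d → ℕ) (hℓ : ∀ i, 5 ≤ ℓ i) (a b c e : Fin d × Bool)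
    (h : unitVec ℓ a + unitVec ℓ b = unitVec ℓ c + unitVec ℓ e) :
    b = e ∨ a = e ∨ unitVec ℓ b = - unitVec ℓ a := by
  obtain ⟨i, s⟩ := e
  obtain ⟨h1, h2, h3, h4⟩ := smalls (hℓ i)
  have hi := congrFun h i
  simp only [Pi.add_apply] at hi
  by_cases hcs : c = (i, !s)
  · right; right
    have : unitVec ℓ c = - unitVec ℓ (i, s) := by rw [hcs]; exact unitVec_neg ℓ (i, s)
    rw [this, neg_add_cancel, add_comm] at h
    exact eq_neg_of_add_eq_zero_left h
  · have he : unitVec ℓ (i, s) i = if s then 1 else -1 := by simp [unitVec]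
    rw [he] at hi
    rcases unitVec_apply ℓ i a with ⟨_, ha⟩ | ⟨ha', ha⟩ | ⟨ha', ha⟩ <;>
    rcases unitVec_apply ℓ i b with ⟨_, hb⟩ | ⟨hb', hb⟩ | ⟨hb', hb⟩ <;>
    rcases unitVec_apply ℓ i c with ⟨_, hc⟩ | ⟨hc', hc⟩ | ⟨hc', hc⟩ <;>
    rw [ha, hb, hc] at hi <;> cases s <;>
    simp only [if_true, Bool.false_eq_true, if_false, Bool.not_true, Bool.not_false] at hi hcs <;>
    first
      | exact Or.inl hb'
      | exact Or.inr (Or.inl ha')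
      | exact absurd hc' hcs
      | exfalso; first
        | exact h1 (by linear_combination hi)
        | exact h1 (by linear_combination -hi)
        | exact h2 (by linear_combination hi)
        | exact h2 (by linear_combination -hi)
        | exact h3 (by linear_combination hi)
        | exact h3 (by linear_combination -hi)
        | exact h4 (by linear_combination hi)
        | exact h4 (by linear_combination -hi)

theorem translation_isPerfect {d : ℕ} (ℓ : Fin d → ℕ) (p : Fin d × Bool) :
    IsPerfectTranslation d ℓ (fun v => v + unitVec ℓ p) := by
  refine ⟨(Equiv.addRight (unitVec ℓ p)).bijective, fun v => ?_, fun v w => ?_⟩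
  · rw [cycAdj_iff]; exact ⟨p, by simp⟩
  · simp [cycAdj_iff]

theorem perfect_eq {d : ℕ} (ℓ : Fin d → ℕ) (hℓ : ∀ i, 5 ≤ ℓ i)
    (f : (∀ j, ZMod (ℓ j)) → (∀ j, ZMod (ℓ j))) (hf : IsPerfectTranslation d ℓ f) :
    ∃ p, ∀ v, f v = v + unitVec ℓ p := by
  have h0 : ∀ v, ∃ p, f v - v = unitVec ℓ p := fun v => (cycAdj_iff ℓ _ _).1 (hf.adj_map v)
  choose δ hδ using h0
  have hfv : ∀ v, f v = v + unitVec ℓ (δ v) := fun v => by rw [← hδ]; abel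
  -- trichotomy along an edge
  have key : ∀ v a, δ (v + unitVec ℓ a) = δ v ∨ a = δ v ∨
      unitVec ℓ (δ (v + unitVec ℓ a)) = - unitVec ℓ a := by
    intro v a
    obtain ⟨c, hc⟩ := (cycAdj_iff ℓ _ _).1 ((hf.pres v (v + unitVec ℓ a)).1
      ((cycAdj_iff ℓ _ _).2 ⟨a, by simp⟩))
    apply unitVec_sum ℓ hℓ a _ c _
    rw [← hc, hfv, hfv v]; abel
  have hne : ∀ a, unitVec ℓ a ≠ - unitVec ℓ a := by
    rintro ⟨i, b⟩ h
    rw [← unitVec_neg] at h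
    have := unitVec_inj ℓ hℓ h
    simp at this
  -- backwards propagation
  have back : ∀ v a, δ v = a → δ (v - unitVec ℓ a) = a := by
    intro v a h
    have := key (v - unitVec ℓ a) a
    rw [sub_add_cancel, h] at this
    rcases this with h | h | h
    · exact h.symm
    · exact h.symm
    · exact absurd h (hne a)
  have backn : ∀ (n : ℕ) v a, δ v = a → δ (v - n • unitVec ℓ a) = a := by
    intro n v a h
    induction n with
    | zero => simpa using h
    | succ n ih =>
      have := back _ _ ih
      rwa [sub_sub, ← succ_nsmul] at this
  have hper : ∀ a : Fin d × Bool, (ℓ a.1) • unitVec ℓ a = 0 := by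
    rintro ⟨i, b⟩
    simp [unitVec, ← Pi.single_smul]
  have fwd : ∀ v a, δ v = a → δ (v + unitVec ℓ a) = a := by
    intro v a h
    have h2 := backn (ℓ a.1 - 1) v a h
    have h3 : (ℓ a.1 - 1) • unitVec ℓ a = - unitVec ℓ a := by
      apply eq_neg_of_add_eq_zero_left
      rw [← succ_nsmul, Nat.sub_add_cancel (by have := hℓ a.1; omega), hper]
    rwa [h3, sub_neg_eq_add] at h2
  have step : ∀ v a, δ (v + unitVec ℓ a) = δ v := by
    intro v a
    rcases key v a with h | h | h
    · exact h
    · rw [← h]; exact fwd v a h.symm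
    · rw [← unitVec_neg] at h
      have h := unitVec_inj ℓ hℓ h
      have h2 := fwd _ _ h
      rw [unitVec_neg, add_neg_cancel_right] at h2
      rw [h, h2]
  have stepn : ∀ (n : ℕ) v a, δ (v + n • unitVec ℓ a) = δ v := by
    intro n v a
    induction n with
    | zero => simp
    | succ n ih => rw [succ_nsmul, ← add_assoc, step, ih]
  have hconst : ∀ x v, δ (v + x) = δ v := by
    intro x
    rw [← Finset.univ_sum_single x]
    refine Finset.sum_induction _ (fun x => ∀ v, δ (v + x) = δ v) ?_ ?_ ?_
    · intro a b ha hb v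
      rw [← add_assoc, hb, ha]
    · simp
    · intro i _ v
      have : NeZero (ℓ i) := ⟨by have := hℓ i; omega⟩
      have := stepn (x i).val v (i, true)
      rwa [unitVec, ← Pi.single_smul, if_pos rfl, nsmul_one, ZMod.natCast_zmod_val] at this
  refine ⟨δ 0, fun v => ?_⟩
  rw [hfv v]
  have := hconst v 0
  rw [zero_add] at this
  rw [this]

theorem card_perfect_translations (d : ℕ) (hd : 1 ≤ d) (ℓ : Fin d → ℕ)
    (hℓ : ∀ i, 5 ≤ ℓ i) :
    Nat.card {f : (∀ j, ZMod (ℓ j)) → (∀ j, ZMod (ℓ j)) //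
      IsPerfectTranslation d ℓ f} = 2 * d := by
  have hb : Function.Bijective (fun p : Fin d × Bool =>
      (⟨fun v => v + unitVec ℓ p, translation_isPerfect ℓ p⟩ :
        {f : (∀ j, ZMod (ℓ j)) → (∀ j, ZMod (ℓ j)) // IsPerfectTranslation d ℓ f})) := by
    constructor
    · intro p q h
      have := congrFun (congrArg Subtype.val h) 0
      simp only [zero_add] at this
      exact unitVec_inj ℓ hℓ this
    · rintro ⟨f, hf⟩
      obtain ⟨p, hp⟩ := perfect_eq ℓ hℓ f hf
      exact ⟨p, Subtype.ext (funext fun v => (hp v).symm)⟩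
  rw [← Nat.card_eq_of_bijective _ hb]
  simp [Nat.card_eq_fintype_card, mul_comm]
end

section
/- Let G be a noncyclic grid graph with parameters d ≥ 1 and lengths ℓ₁,…,ℓ_d satisfying ℓᵢ ≥ 2·(ℓ_{i+1}·…·ℓ_d) + 2 for all i ∈ {1,…,d−1} and ℓ_d ≥ 3. Let f be a candidate graphical translation of G maximizing |V₀,f| among all candidate graphical translations of G. Then there exists m such that the slices (m,1)^⊥ and (m+1,1)^⊥ are both contained in V₀,f, and moreover f((m,1)^⊥ ∪ (m+1,1)^⊥) is not contained in (m,1)^⊥ ∪ (m+1,1)^⊥. -/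
/-- Membership in the vertex set of the noncyclic grid graph with parameters `d` and `ℓ`:
`V = [0, ℓ₁ - 1] × ⋯ × [0, ℓ_d - 1] ⊆ ℤ^d`. -/
def InGrid (d : ℕ) (ℓ : Fin d → ℕ) (v : Fin d → ℤ) : Prop :=
  ∀ i, 0 ≤ v i ∧ v i < ℓ i

/-- Adjacency in the noncyclic grid graph: taxicab distance equal to `1`. -/
def TaxiAdj {d : ℕ} (v w : Fin d → ℤ) : Prop :=
  (∑ i, |v i - w i|) = 1

/-- The `i`-th canonical basis vector of `ℤ^d`. -/
def gridBasis (d : ℕ) (i : Fin d) : Fin d → ℤ :=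
  fun j => if j = i then 1 else 0

/-- A candidate graphical translation of the noncyclic grid graph with parameters `d`
and `ℓ`: a map `f : V → V ∪ {ω}` (modeled with `Option`, `none` being the black hole
`ω`) that is injective on `V₀,f = f⁻¹(V)`, maps every vertex of `V₀,f` to a neighbor,
and preserves (non-)adjacency both ways on `V₀,f`. -/
structure IsCandidateGridTranslation (d : ℕ) (ℓ : Fin d → ℕ)
    (f : {v : Fin d → ℤ // InGrid d ℓ v} → Option {v : Fin d → ℤ // InGrid d ℓ v}) :
    Prop where
  inj : ∀ v w x, f v = some x → f w = some x → v = w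
  adj_map : ∀ v w, f v = some w → TaxiAdj v.1 w.1
  pres : ∀ v₁ v₂ w₁ w₂, f v₁ = some w₁ → f v₂ = some w₂ →
    (TaxiAdj v₁.1 v₂.1 ↔ TaxiAdj w₁.1 w₂.1)

/-- Neighbours differ by a signed basis vector. -/
lemma taxi_iff {d : ℕ} (v w : Fin d → ℤ) :
    TaxiAdj v w ↔ ∃ i, ∃ s : ℤ, (s = 1 ∨ s = -1) ∧ w = v + Pi.single i s := by
  unfold TaxiAdj
  constructor
  · intro h
    have hex : ∃ i, v i ≠ w i := by
      by_contra! hc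
      simp [hc] at h
    obtain ⟨i, hi⟩ := hex
    rw [← Finset.add_sum_erase _ _ (Finset.mem_univ i)] at h
    have h1 : 1 ≤ |v i - w i| := Int.one_le_abs (sub_ne_zero.mpr hi)
    have h2 : 0 ≤ ∑ x ∈ Finset.univ.erase i, |v x - w x| :=
      Finset.sum_nonneg (fun _ _ => abs_nonneg _)
    have h3 : ∑ x ∈ Finset.univ.erase i, |v x - w x| = 0 := by linarith
    have h4 : |v i - w i| = 1 := by linarith
    rw [Finset.sum_eq_zero_iff_of_nonneg (fun _ _ => abs_nonneg _)] at h3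
    refine ⟨i, w i - v i, ?_, ?_⟩
    · rcases abs_eq (by norm_num : (0:ℤ) ≤ 1) |>.mp h4 with h | h <;> omega
    · ext j
      by_cases hj : j = i
      · subst hj; simp
      · have := h3 j (by simp [hj])
        rw [abs_eq_zero] at this
        simp [Pi.single_apply, hj]; omega
  · rintro ⟨i, s, hs, rfl⟩
    rw [Finset.sum_eq_single i]
    · rcases hs with rfl | rfl <;> simp
    · intro j _ hj; simp [Pi.single_apply, hj]
    · simp

lemma taxi_add {d : ℕ} (v : Fin d → ℤ) (i : Fin d) (s : ℤ) (hs : s = 1 ∨ s = -1) :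
    TaxiAdj v (v + Pi.single i s) := (taxi_iff _ _).2 ⟨i, s, hs, rfl⟩

lemma taxi_symm {d : ℕ} {v w : Fin d → ℤ} (h : TaxiAdj v w) : TaxiAdj w v := by
  unfold TaxiAdj at *
  simpa only [abs_sub_comm] using h

lemma common_nbr {d : ℕ} {v x z : Fin d → ℤ} {i j : Fin d} {s t : ℤ}
    (hs : s = 1 ∨ s = -1) (ht : t = 1 ∨ t = -1) (hne : i = j → s = t)
    (hz : z = v + Pi.single i s + Pi.single j t)
    (h1 : TaxiAdj v x) (h2 : TaxiAdj x z) :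
    x = v + Pi.single i s ∨ x = v + Pi.single j t := by
  obtain ⟨k, a, ha, rfl⟩ := (taxi_iff _ _).1 h1
  obtain ⟨l, b, hb, h⟩ := (taxi_iff _ _).1 h2
  rw [hz] at h
  have key : (k = i ∧ a = s) ∨ (k = j ∧ a = t) := by
    have e1 := congrFun h i
    have e2 := congrFun h j
    have e3 := congrFun h k
    simp only [Pi.add_apply, Pi.single_apply] at e1 e2 e3
    clear h h1 h2 hz
    by_cases hij : i = j
    · have := hne hij
      subst hij this
      simp at e1 e2 e3
      by_cases hk : i = k
      · subst hk
        simp at e1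
        by_cases hl : i = l <;> simp [hl] at e1 <;> grind
      · by_cases hl : i = l <;> simp [hk, hl] at e1 <;> grind
    · have hij' : j ≠ i := fun h => hij h.symm
      by_cases hk : k = i
      · subst hk
        grind
      · by_cases hk2 : k = j
        · subst hk2; grind
        · grind
  rcases key with ⟨rfl, rfl⟩ | ⟨rfl, rfl⟩ <;> simp

/-- The partial map as a relation on integer vectors. -/
def FRel {d : ℕ} {ℓ : Fin d → ℕ}
    (f : {v : Fin d → ℤ // InGrid d ℓ v} → Option {v : Fin d → ℤ // InGrid d ℓ v})
    (v w : Fin d → ℤ) : Prop := ∃ hv hw, f ⟨v, hv⟩ = some ⟨w, hw⟩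

section Swap
variable {d : ℕ} {ℓ : Fin d → ℕ}
    {f : {v : Fin d → ℤ // InGrid d ℓ v} → Option {v : Fin d → ℤ // InGrid d ℓ v}}

lemma FRel.inj (hf : IsCandidateGridTranslation d ℓ f) {v v' w} (h : FRel f v w)
    (h' : FRel f v' w) : v = v' := by
  obtain ⟨a, b, c⟩ := h
  obtain ⟨a', b', c'⟩ := h'
  exact congrArg Subtype.val (hf.inj _ _ _ c c')

lemma FRel.fn {v w w'} (h : FRel f v w) (h' : FRel f v w') : w = w' := by
  obtain ⟨a, b, c⟩ := h
  obtain ⟨a', b', c'⟩ := h'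
  rw [c] at c'
  simpa using c'

lemma FRel.adj (hf : IsCandidateGridTranslation d ℓ f) {v w} (h : FRel f v w) :
    TaxiAdj v w := by
  obtain ⟨a, b, c⟩ := h
  exact hf.adj_map _ _ c

lemma FRel.pres (hf : IsCandidateGridTranslation d ℓ f) {v v' w w'} (h : FRel f v w)
    (h' : FRel f v' w') : TaxiAdj v v' ↔ TaxiAdj w w' := by
  obtain ⟨a, b, c⟩ := h
  obtain ⟨a', b', c'⟩ := h'
  exact hf.pres _ _ _ _ c c'

/-- The pair of slices `m`, `m+1`. -/
def InPair (ℓ : Fin d → ℕ) (i0 : Fin d) (m : ℤ) (v : Fin d → ℤ) : Prop :=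
  InGrid d ℓ v ∧ (v i0 = m ∨ v i0 = m + 1)

lemma grid_finite (d : ℕ) (ℓ : Fin d → ℕ) : {v | InGrid d ℓ v}.Finite := by
  apply (Set.Finite.pi' (fun i => Set.finite_Ico (0:ℤ) (ℓ i))).subset
  intro v hv i
  exact hv i

lemma pair_surj (hf : IsCandidateGridTranslation d ℓ f) {i0 : Fin d} {m : ℤ}
    (htot : ∀ v, InPair ℓ i0 m v → ∃ w, FRel f v w)
    (hcl : ∀ v w, InPair ℓ i0 m v → FRel f v w → InPair ℓ i0 m w) (w : Fin d → ℤ)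
    (hw : InPair ℓ i0 m w) : ∃ v, InPair ℓ i0 m v ∧ FRel f v w := by
  choose! g hg using htot
  have hfin : {v | InPair ℓ i0 m v}.Finite := (grid_finite d ℓ).subset (fun v hv => hv.1)
  have hmaps : Set.MapsTo g {v | InPair ℓ i0 m v} {v | InPair ℓ i0 m v} :=
    fun v hv => hcl v _ hv (hg v hv)
  have hinj : Set.InjOn g {v | InPair ℓ i0 m v} := by
    intro v hv v' hv' h
    have h1 := hg v hv
    rw [h] at h1
    exact h1.inj hf (hg v' hv')
  have himg : g '' {v | InPair ℓ i0 m v} = {v | InPair ℓ i0 m v} :=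
    Set.eq_of_subset_of_ncard_le hmaps.image_subset (Set.ncard_image_of_injOn hinj).ge hfin
  have hw2 : w ∈ g '' {v | InPair ℓ i0 m v} := by rw [himg]; exact hw
  obtain ⟨v, hv, rfl⟩ := hw2
  exact ⟨v, hv, hg v hv⟩

lemma corner (hf : IsCandidateGridTranslation d ℓ f) {i0 : Fin d} {m : ℤ}
    (hℓ : ∀ i, 3 ≤ ℓ i)
    (htot : ∀ v, InPair ℓ i0 m v → ∃ w, FRel f v w)
    (hcl : ∀ v w, InPair ℓ i0 m v → FRel f v w → InPair ℓ i0 m w)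
    (c : Fin d → ℤ) (hc : InPair ℓ i0 m c) (i : Fin d) (hi : i ≠ i0) (hci : c i = 0) :
    ¬ FRel f c (c + Pi.single i 1) := by
  intro hF
  have hshift : ∀ (b : Fin d → ℤ) (s : ℤ), InPair ℓ i0 m b → b i = 0 → 0 ≤ s → s ≤ 2 →
      InPair ℓ i0 m (b + Pi.single i s) := by
    intro b s hb hbi h0 h2
    refine ⟨fun j => ?_, ?_⟩
    · by_cases hj : j = i
      · subst hj
        have := hℓ j
        simp [hbi]; omega
      · simpa [Pi.single_apply, hj] using hb.1 j
    · simpa [Pi.single_apply, hi.symm] using hb.2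
  -- preimage of c + 2 e_i
  have h2 : c + Pi.single i 2 = c + Pi.single i (1:ℤ) + Pi.single i 1 := by
    ext j; by_cases hj : j = i
    · subst hj; simp; ring
    · simp [hj]
  obtain ⟨w, hw, hwF⟩ := pair_surj hf htot hcl _ (hshift c 2 hc hci (by norm_num) le_rfl)
  have hcw : TaxiAdj c w := by
    rw [hF.pres hf hwF, h2]
    exact taxi_add _ _ _ (Or.inl rfl)
  have hw1 : w = c + Pi.single i 1 := by
    rcases common_nbr (Or.inl rfl) (Or.inl rfl) (fun _ => rfl) h2 hcw (hwF.adj hf) with h | h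
      <;> exact h
  subst hw1
  -- preimage of c
  obtain ⟨u, hu, huF⟩ := pair_surj hf htot hcl c hc
  obtain ⟨k, a, ha, rfl⟩ := (taxi_iff _ _).1 (taxi_symm (huF.adj hf))
  have hki : k ≠ i := by
    rintro rfl
    have ha1 : a = 1 := by
      rcases ha with h | h
      · exact h
      · have := (hu.1 k).1
        simp [hci, h] at this
    subst ha1
    have := congrFun (hwF.fn huF) k
    simp at this
  have hu0 : (c + Pi.single k a : Fin d → ℤ) i = 0 := by
    simp [hki.symm, hci]
  obtain ⟨x, hx, hxF⟩ := pair_surj hf htot hcl _ (hshift _ 1 hu hu0 (by norm_num) (by norm_num))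
  have e : c + Pi.single k a + Pi.single i 1 = c + Pi.single i (1:ℤ) + Pi.single k a := by ring
  have hcx : TaxiAdj c x := by
    rw [hF.pres hf hxF, e]
    exact taxi_add _ _ _ ha
  rcases common_nbr ha (Or.inl rfl) (fun h => absurd h hki) rfl hcx (hxF.adj hf) with h | h
  · subst h
    have := congrFun (huF.fn hxF) i
    simp [hki.symm] at this
  · subst h
    have := congrFun (hwF.fn hxF) i
    simp [hki.symm] at this

lemma swap_all (hf : IsCandidateGridTranslation d ℓ f) {i0 : Fin d} {m : ℤ}
    (hm : 0 ≤ m) (hm' : m + 1 < ℓ i0)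
    (hℓ : ∀ i, 3 ≤ ℓ i)
    (htot : ∀ v, InPair ℓ i0 m v → ∃ w, FRel f v w)
    (hcl : ∀ v w, InPair ℓ i0 m v → FRel f v w → InPair ℓ i0 m w) :
    ∀ (n : ℕ) (v : Fin d → ℤ), InPair ℓ i0 m v → ∑ i ∈ Finset.univ.erase i0, v i = n →
      FRel f v (v + Pi.single i0 (2 * m + 1 - 2 * v i0)) := by
  intro n
  induction n with
  | zero =>
    intro v hv hsum
    have h0 : ∀ i, i ≠ i0 → v i = 0 := by
      intro i hi
      rw [Nat.cast_zero, Finset.sum_eq_zero_iff_of_nonneg (fun j _ => (hv.1 j).1)] at hsum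
      exact hsum i (by simp [hi])
    obtain ⟨w, hw⟩ := htot v hv
    obtain ⟨k, a, ha, rfl⟩ := (taxi_iff _ _).1 (hw.adj hf)
    have hwH := hcl _ _ hv hw
    by_cases hk : k = i0
    · subst hk
      have h1 := hwH.2
      have h2 := hv.2
      simp at h1
      have : a = 2 * m + 1 - 2 * v k := by omega
      rw [← this]; exact hw
    · exfalso
      rcases ha with rfl | rfl
      · exact corner hf hℓ htot hcl v hv k hk (h0 k hk) hw
      · have := (hwH.1 k).1
        simp [h0 k hk] at this
  | succ n ih =>
    intro v hv hsum
    have hex : ∃ i, i ≠ i0 ∧ v i ≠ 0 := by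
      by_contra! hc
      rw [Finset.sum_eq_zero (fun i hi => hc i (by simpa using hi))] at hsum
      push_cast at hsum
      omega
    obtain ⟨i, hi, hvi⟩ := hex
    have hvpos : 0 < v i := lt_of_le_of_ne (hv.1 i).1 hvi.symm
    have hs : 2 * m + 1 - 2 * v i0 = 1 ∨ 2 * m + 1 - 2 * v i0 = -1 := by
      rcases hv.2 with h | h <;> omega
    generalize hsd : 2 * m + 1 - 2 * v i0 = s at hs ⊢
    have hu : InPair ℓ i0 m (v + Pi.single i (-1)) := by
      refine ⟨fun j => ?_, by simpa [hi.symm] using hv.2⟩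
      have := hv.1 j
      by_cases hj : j = i
      · subst hj; simp; omega
      · simpa [hj] using this
    have hu' : InPair ℓ i0 m (v + Pi.single i (-1) + Pi.single i0 s) := by
      refine ⟨fun j => ?_, ?_⟩
      · by_cases hj : j = i0
        · subst hj
          simp [hi.symm]
          rcases hv.2 with h | h <;> omega
        · simpa [hj] using hu.1 j
      · simp [hi.symm]
        rcases hv.2 with h | h <;> omega
    have hsumu : ∑ j ∈ Finset.univ.erase i0, (v + Pi.single i (-1) : Fin d → ℤ) j = n := by
      simp only [Pi.add_apply, Finset.sum_add_distrib, hsum, Pi.single_apply,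
        Finset.sum_ite_eq', Finset.mem_erase, Finset.mem_univ, hi]
      simp [hi]
    have hsumu' : ∑ j ∈ Finset.univ.erase i0,
        (v + Pi.single i (-1) + Pi.single i0 s : Fin d → ℤ) j = n := by
      rw [← hsumu]
      apply Finset.sum_congr rfl
      intro j hj
      have : j ≠ i0 := by simpa using hj
      simp [this]
    have F1 := ih _ hu hsumu
    have F2 := ih _ hu' hsumu'
    have e1 : 2 * m + 1 - 2 * (v + Pi.single i (-1) : Fin d → ℤ) i0 = s := by
      simp [hi.symm, hsd]
    rw [e1] at F1
    have e2 : v + Pi.single i (-1) + Pi.single i0 s + Pi.single i0 (2 * m + 1 -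
        2 * (v + Pi.single i (-1) + Pi.single i0 s : Fin d → ℤ) i0) = v + Pi.single i (-1) := by
      ext j
      by_cases hj : j = i0
      · subst hj
        simp [hi.symm]; omega
      · simp [hj]
    rw [e2] at F2
    obtain ⟨w, hw⟩ := htot v hv
    have hadj := (hw.pres hf F1).1 (taxi_add _ _ _ (Or.inr rfl))
    rcases common_nbr (Or.inr rfl) hs (fun h => absurd h hi) rfl (hw.adj hf) hadj with h | h
    · subst h
      have := congrFun (hw.inj hf F2) i
      simp [hi] at this
    · rw [← h]; exact hw

lemma missing (hf : IsCandidateGridTranslation d ℓ f) {i0 : Fin d} {m : ℤ}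
    (hm : 0 ≤ m) (hm' : m + 1 < ℓ i0)
    (hℓ : ∀ i, 3 ≤ ℓ i)
    (htot : ∀ v, InPair ℓ i0 m v → ∃ w, FRel f v w)
    (hcl : ∀ v w, InPair ℓ i0 m v → FRel f v w → InPair ℓ i0 m w)
    (v w : Fin d → ℤ) (hv : v i0 = m - 1 ∨ v i0 = m + 2) : ¬ FRel f v w := by
  intro hw
  have hvg : InGrid d ℓ v := hw.1
  have hall : ∀ v, InPair ℓ i0 m v → FRel f v (v + Pi.single i0 (2 * m + 1 - 2 * v i0)) := by
    intro v hv
    refine swap_all hf hm hm' hℓ htot hcl (∑ i ∈ Finset.univ.erase i0, v i).toNat v hv ?_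
    rw [Int.toNat_of_nonneg]
    exact Finset.sum_nonneg (fun j _ => (hv.1 j).1)
  obtain ⟨s, hs, hsv⟩ : ∃ s : ℤ, (s = 1 ∨ s = -1) ∧
      ((s = 1 ∧ v i0 = m - 1) ∨ (s = -1 ∧ v i0 = m + 2)) := by
    rcases hv with h | h
    · exact ⟨1, by simp, by simp [h]⟩
    · exact ⟨-1, by simp, by simp [h]⟩
  have hP : ∀ t : ℤ, (t = s ∨ t = 2 * s) → InPair ℓ i0 m (v + Pi.single i0 t) := by
    intro t ht
    refine ⟨fun j => ?_, ?_⟩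
    · by_cases hj : j = i0
      · subst hj
        simp; omega
      · simpa [hj] using hvg j
    · simp; omega
  have F1 := hall _ (hP s (Or.inl rfl))
  have F2 := hall _ (hP (2 * s) (Or.inr rfl))
  have e1 : (2 * m + 1 - 2 * (v + Pi.single i0 s : Fin d → ℤ) i0) = s := by
    simp; omega
  have e2 : v + Pi.single i0 (2 * s) + Pi.single i0 (2 * m + 1 -
      2 * (v + Pi.single i0 (2 * s) : Fin d → ℤ) i0) = v + Pi.single i0 s := by
    ext j
    by_cases hj : j = i0
    · subst hj; simp; omega
    · simp [hj]
  rw [e1] at F1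
  rw [e2] at F2
  have hadj := (hw.pres hf F1).1 (taxi_add _ _ _ hs)
  have hww : w = v + Pi.single i0 s := by
    rcases common_nbr hs hs (fun _ => rfl) rfl (hw.adj hf) hadj with h | h <;> exact h
  subst hww
  have := congrFun (hw.inj hf F2) i0
  simp at this
  omega

end Swap

instance gridFinite (d : ℕ) (ℓ : Fin d → ℕ) : Finite {v : Fin d → ℤ // InGrid d ℓ v} :=
  (grid_finite d ℓ).to_subtype

lemma slice_card {d : ℕ} (ℓ : Fin d → ℕ) (i0 : Fin d) (t : ℤ) (h0 : 0 ≤ t) (h1 : t < ℓ i0) :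
    Set.ncard {u : {v : Fin d → ℤ // InGrid d ℓ v} | u.1 i0 = t} =
      ∏ k ∈ Finset.univ.erase i0, ℓ k := by
  rw [← Set.ncard_image_of_injective _ Subtype.val_injective]
  have : Subtype.val '' {u : {v : Fin d → ℤ // InGrid d ℓ v} | u.1 i0 = t} =
      ((Fintype.piFinset (fun i => if i = i0 then {t} else Finset.Ico (0:ℤ) (ℓ i)) :
        Finset (Fin d → ℤ)) : Set (Fin d → ℤ)) := by
    ext v
    simp only [Set.mem_image, Set.mem_ofPred_eq, Subtype.exists, exists_and_left, exists_prop,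
      exists_eq_right_right, Finset.mem_coe, Fintype.mem_piFinset]
    constructor
    · rintro ⟨h, hg⟩ i
      by_cases hi : i = i0
      · subst hi; simp [h]
      · simpa [hi] using hg i
    · intro h
      have ht : v i0 = t := by simpa using h i0
      refine ⟨ht, fun i => ?_⟩
      by_cases hi : i = i0
      · subst hi; omega
      · simpa [hi] using h i
  rw [this, Set.ncard_coe_finset, Fintype.card_piFinset,
    ← Finset.mul_prod_erase _ _ (Finset.mem_univ i0)]
  simp only [if_true, Finset.card_singleton, one_mul]
  apply Finset.prod_congr rfl
  intro k hk
  have : k ≠ i0 := by simpa using hk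
  simp [this]

lemma missing_card {d : ℕ} (ℓ : Fin d → ℕ) (i0 : Fin d) (hpos : 0 < ℓ i0)
    (f : {v : Fin d → ℤ // InGrid d ℓ v} → Option {v : Fin d → ℤ // InGrid d ℓ v})
    (hmax : ∀ g, IsCandidateGridTranslation d ℓ g →
      Set.ncard {v | g v ≠ none} ≤ Set.ncard {v | f v ≠ none}) :
    Set.ncard {v | f v = none} ≤ ∏ k ∈ Finset.univ.erase i0, ℓ k := by
  classical
  let g : {v : Fin d → ℤ // InGrid d ℓ v} → Option {v : Fin d → ℤ // InGrid d ℓ v} :=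
    fun v => if h : InGrid d ℓ (v.1 + Pi.single i0 1) then some ⟨_, h⟩ else none
  have hg : ∀ v w, g v = some w → w.1 = v.1 + Pi.single i0 1 := by
    intro v w h
    simp only [g] at h
    split_ifs at h with h'
    simp only [Option.some.injEq] at h
    rw [← h]
  have hcand : IsCandidateGridTranslation d ℓ g := by
    refine ⟨?_, ?_, ?_⟩
    · intro v w x h h'
      have := (hg _ _ h).symm.trans (hg _ _ h')
      exact Subtype.ext (add_right_cancel this)
    · intro v w h
      rw [hg _ _ h]
      exact taxi_add _ _ _ (Or.inl rfl)
    · intro v1 v2 w1 w2 h h'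
      rw [hg _ _ h, hg _ _ h']
      simp [TaxiAdj]
  have hle := hmax g hcand
  have c1 := Set.ncard_add_ncard_compl {v | g v = none}
  have c2 := Set.ncard_add_ncard_compl {v | f v = none}
  have e1 : {v | g v = none}ᶜ = {v | g v ≠ none} := rfl
  have e2 : {v | f v = none}ᶜ = {v | f v ≠ none} := rfl
  rw [e1] at c1
  rw [e2] at c2
  have hgs : {v | g v = none} = {u | u.1 i0 = (ℓ i0 : ℤ) - 1} := by
    ext v
    simp only [Set.mem_ofPred_eq, g]
    have hv := v.2
    constructor
    · intro h
      by_contra hne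
      have : InGrid d ℓ (v.1 + Pi.single i0 1) := by
        intro j
        have := hv j
        by_cases hj : j = i0
        · subst hj; simp; omega
        · simpa [hj] using this
      simp [this] at h
    · intro h
      rw [dif_neg]
      intro hc
      have := (hc i0).2
      simp [h] at this
  have := slice_card ℓ i0 ((ℓ i0 : ℤ) - 1) (by omega) (by omega)
  rw [← hgs] at this
  omega

theorem exists_adjacent_slices_in_domain
    (d : ℕ) (hd : 0 < d) (ℓ : Fin d → ℕ)
    (hℓ : ∀ i : Fin d, (i : ℕ) + 1 < d →
      2 * (∏ k ∈ Finset.univ.filter (fun k : Fin d => i < k), ℓ k) + 2 ≤ ℓ i)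
    (hlast : 3 ≤ ℓ ⟨d - 1, by omega⟩)
    (f : {v : Fin d → ℤ // InGrid d ℓ v} → Option {v : Fin d → ℤ // InGrid d ℓ v})
    (hf : IsCandidateGridTranslation d ℓ f)
    (hmax : ∀ g, IsCandidateGridTranslation d ℓ g →
      Set.ncard {v | g v ≠ none} ≤ Set.ncard {v | f v ≠ none})
    :
    ∃ m : ℤ,
      ({u : {v : Fin d → ℤ // InGrid d ℓ v} | u.1 ⟨0, hd⟩ = m ∨ u.1 ⟨0, hd⟩ = m + 1} ⊆
        {u | f u ≠ none}) ∧
      ∃ u, (u.1 ⟨0, hd⟩ = m ∨ u.1 ⟨0, hd⟩ = m + 1) ∧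
        ∃ w, f u = some w ∧ ¬ (w.1 ⟨0, hd⟩ = m ∨ w.1 ⟨0, hd⟩ = m + 1) := by
  have hlpos : ∀ i, 2 ≤ ℓ i := by
    intro i
    by_cases h : (i : ℕ) + 1 < d
    · have := hℓ i h; omega
    · have : i = ⟨d - 1, by omega⟩ := by ext; simp; omega
      rw [this]; omega
  have hl3 : ∀ i, 3 ≤ ℓ i := by
    intro i
    by_cases h : (i : ℕ) + 1 < d
    · have := hℓ i h
      have : 0 < ∏ k ∈ Finset.univ.filter (fun k : Fin d => i < k), ℓ k :=
        Finset.prod_pos (fun k _ => by have := hlpos k; omega)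
      omega
    · have : i = ⟨d - 1, by omega⟩ := by ext; simp; omega
      rw [this]; exact hlast
  have hM := missing_card ℓ ⟨0, hd⟩ (by have := hl3 ⟨0, hd⟩; omega) f hmax
  by_cases hd1 : d = 1
  · subst hd1
    have hl := hl3 0
    have hu0 : ∀ i : Fin 1, i = 0 := fun i => Subsingleton.elim _ _
    have hg0 : InGrid 1 ℓ (fun _ => 0) := by
      intro i; have := hl3 i; simp; omega
    have hg1 : InGrid 1 ℓ (fun _ => (ℓ 0 : ℤ) - 1) := by
      intro i; rw [hu0 i]; simp only; omega
    have hM1 : Set.ncard {v | f v = none} ≤ 1 := by simpa using hM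
    have hone : ∀ (c : ℤ) (hc : InGrid 1 ℓ (fun _ => c)), f ⟨_, hc⟩ ≠ none →
        ∀ u : {v : Fin 1 → ℤ // InGrid 1 ℓ v}, u.1 0 = c → f u ≠ none := by
      intro c hc h u hu
      have : u = ⟨_, hc⟩ := by
        apply Subtype.ext; ext i; rw [hu0 i]; exact hu
      rwa [this]
    have hadj : ∀ u w, f u = some w → |u.1 0 - w.1 0| = 1 := by
      intro u w h
      have := hf.adj_map u w h
      simpa [TaxiAdj] using this
    by_cases h0 : f ⟨_, hg0⟩ = none
    · have h1 : f ⟨_, hg1⟩ ≠ none := by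
        intro h1
        have := (Set.ncard_le_one (Set.toFinite _)).1 hM1 _ h0 _ h1
        have := congrFun (congrArg Subtype.val this) 0
        simp at this
        omega
      refine ⟨(ℓ 0 : ℤ) - 1, ?_, ⟨_, hg1⟩, Or.inl rfl, ?_⟩
      · rintro u (hu | hu)
        · exact hone _ hg1 h1 u hu
        · have := (u.2 0).2
          change u.1 0 = _ at hu
          omega
      · obtain ⟨w, hw⟩ := Option.ne_none_iff_exists'.1 h1
        refine ⟨w, hw, ?_⟩
        have h2 := hadj _ _ hw
        have h3 := w.2 0
        change |((ℓ 0 : ℤ) - 1) - w.1 0| = 1 at h2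
        change ¬ (w.1 0 = _ ∨ w.1 0 = _)
        rintro (h | h)
        · rw [h] at h2; simp at h2
        · omega
    · refine ⟨-1, ?_, ⟨_, hg0⟩, Or.inr rfl, ?_⟩
      · rintro u (hu | hu)
        · have := (u.2 0).1
          change u.1 0 = _ at hu
          omega
        · exact hone _ hg0 h0 u hu
      · obtain ⟨w, hw⟩ := Option.ne_none_iff_exists'.1 h0
        refine ⟨w, hw, ?_⟩
        have h2 := hadj _ _ hw
        have h3 := w.2 0
        change |(0:ℤ) - w.1 0| = 1 at h2
        change ¬ (w.1 0 = _ ∨ w.1 0 = _)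
        rintro (h | h)
        · omega
        · rw [h] at h2; simp at h2
  -- main case
  have hd2 : 1 < d := by omega
  have hP0 := hℓ ⟨0, hd⟩ (by simpa using hd2)
  have hfil : Finset.univ.filter (fun k : Fin d => (⟨0, hd⟩ : Fin d) < k) =
      Finset.univ.erase ⟨0, hd⟩ := by
    ext k
    simp [Fin.lt_def, Fin.ext_iff]
    omega
  rw [hfil] at hP0
  have hcard := slice_card ℓ ⟨0, hd⟩
  have hP3 : 3 ≤ ∏ k ∈ Finset.univ.erase (⟨0, hd⟩ : Fin d), ℓ k := by
    have hmem : (⟨1, hd2⟩ : Fin d) ∈ Finset.univ.erase (⟨0, hd⟩ : Fin d) := by simp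
    refine (hl3 ⟨1, hd2⟩).trans
      (Finset.single_le_prod' (f := ℓ) (fun k _ => by have := hl3 k; omega) hmem)
  generalize (∏ k ∈ Finset.univ.erase (⟨0, hd⟩ : Fin d), ℓ k) = P at *
  generalize (⟨0, hd⟩ : Fin d) = i0 at *
  by_contra hcon
  have hmiss : ∀ m : ℤ, 0 ≤ m → m + 1 < ℓ i0 →
      (∀ u : {v : Fin d → ℤ // InGrid d ℓ v}, u.1 i0 = m ∨ u.1 i0 = m + 1 → f u ≠ none) →
      ∀ u : {v : Fin d → ℤ // InGrid d ℓ v}, u.1 i0 = m - 1 ∨ u.1 i0 = m + 2 → f u = none := by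
    intro m hm hm' hfull u hu
    by_contra hne
    obtain ⟨w, hw⟩ := Option.ne_none_iff_exists'.1 hne
    refine missing hf hm hm' hl3 ?_ ?_ u.1 w.1 hu ⟨u.2, w.2, hw⟩
    · intro v hv
      obtain ⟨w, hw⟩ := Option.ne_none_iff_exists'.1 (hfull ⟨v, hv.1⟩ hv.2)
      exact ⟨w.1, hv.1, w.2, hw⟩
    · rintro v w hv ⟨hv', hw', hvw⟩
      refine ⟨hw', ?_⟩
      by_contra hc
      exact hcon ⟨m, fun u hu => hfull u hu, ⟨v, hv'⟩, hv.2, ⟨w, hw'⟩, hvw, hc⟩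
  have hex : ∃ j : ℕ, j ≤ P ∧
      ∀ u : {v : Fin d → ℤ // InGrid d ℓ v},
        u.1 i0 = 2 * j ∨ u.1 i0 = 2 * j + 1 → f u ≠ none := by
    by_contra! hc
    haveI : Nonempty {v : Fin d → ℤ // InGrid d ℓ v} := ⟨(hc 0 (by omega)).choose⟩
    choose! x hx using hc
    have hsub : x '' (Finset.range (P + 1) : Set ℕ) ⊆ {v | f v = none} := by
      rintro _ ⟨j, hj, rfl⟩
      have : j ≤ P := by simp at hj; omega
      exact (hx j this).2
    have h1 := Set.ncard_le_ncard hsub (Set.toFinite _)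
    rw [Set.ncard_image_of_injOn, Set.ncard_coe_finset, Finset.card_range] at h1
    · omega
    · intro a ha b hb hab
      have ha' : a ≤ P := by simp at ha; omega
      have hb' : b ≤ P := by simp at hb; omega
      have h1 := (hx a ha').1
      have h2 := (hx b hb').1
      rw [hab] at h1
      omega
  obtain ⟨j, hj, hjf⟩ := hex
  have hm1 := hmiss (2 * j) (by omega) (by omega) hjf
  -- one entirely missing slice
  obtain ⟨t, ht0, htl, ht⟩ : ∃ t : ℤ, 0 ≤ t ∧ t < ℓ i0 ∧
      ∀ u : {v : Fin d → ℤ // InGrid d ℓ v}, u.1 i0 = t → f u = none := by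
    by_cases h0 : j = 0
    · exact ⟨2 * j + 2, by omega, by omega, fun u hu => hm1 u (Or.inr hu)⟩
    · exact ⟨2 * j - 1, by omega, by omega, fun u hu => hm1 u (Or.inl hu)⟩
  have hrest : ∀ u : {v : Fin d → ℤ // InGrid d ℓ v}, u.1 i0 ≠ t → f u ≠ none := by
    intro u hu hn
    have hsub : insert u {u : {v : Fin d → ℤ // InGrid d ℓ v} | u.1 i0 = t} ⊆
        {v | f v = none} := by
      rintro v (rfl | hv)
      · exact hn
      · exact ht v hv
    have h1 := Set.ncard_le_ncard hsub (Set.toFinite _)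
    rw [Set.ncard_insert_of_notMem (by simpa using hu) (Set.toFinite _), hcard t ht0 htl] at h1
    omega
  have hne : ∀ s : ℤ, 0 ≤ s → s < ℓ i0 →
      ∃ u : {v : Fin d → ℤ // InGrid d ℓ v}, u.1 i0 = s := by
    intro s h0 h1
    have := hcard s h0 h1
    exact Set.nonempty_of_ncard_ne_zero
      (s := {u : {v : Fin d → ℤ // InGrid d ℓ v} | u.1 i0 = s}) (by omega)
  by_cases h3 : t ≤ 3
  · obtain ⟨u, hu⟩ := hne 4 (by omega) (by omega)
    exact hrest u (by omega) (hmiss 5 (by omega) (by omega)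
      (fun v hv => hrest v (by omega)) u (by omega))
  · obtain ⟨u, hu⟩ := hne 0 (by omega) (by omega)
    exact hrest u (by omega) (hmiss 1 (by omega) (by omega)
      (fun v hv => hrest v (by omega)) u (by omega))
end
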